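/- Single-state reachability equation: for all states s, t ∈ S, Δ_{s⇝t} = E ∪ ⋃_{d=call⟨s,u,s'⟩∈D} Δ_{s'⇝t}·Δ_{u⇝ε}·{d}, where E = {ε} if s = t and E = ∅ otherwise. -/

import Mathlib

/-!
A run from `[s]` to `[t]` is either empty, which forces `s = t`, or begins with a transition.
Being a non-shift, that transition is a reduce, which leaves the empty configuration from which
nothing moves, or a call `⟨s, u, s'⟩`, which leaves `u · s'`. Only the top of a configuration is
ever rewritten, so a run from `α · β` either uses up `α` entirely and then continues from `β`, or
ends in `α' · β` with `α'` nonempty (`Reach.split`). For `α = u`, `β = s'` and final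
configuration `t` the second case is excluded by length, so the run decomposes as `u ⇝ ε` followed
by `s' ⇝ t`. Conversely such runs compose, since a run may be carried out above any fixed stack
(`Reach.append_right`, `Reach.trans`). Reversing the sequences gives the stated order of the
factors.
-/

/-- Transitions of a recursive transition network over states `S`,
terminal alphabet `A`, and production labels `P`. -/
inductive Tr (S A P : Type) : Type where
  | shift (s : S) (a : A) (t : S)
  | call (s u t : S)
  | reduce (s : S) (p : P)

variable {S A P : Type}

/-- A transition is a shift transition. -/
def Tr.isShift : Tr S A P → Prop
  | .shift _ _ _ => True
  | _ => False

/-- One-step reachability induced by a single transition on configurations (words over `S`). -/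
inductive Step : Tr S A P → List S → List S → Prop where
  | shift (s : S) (a : A) (t : S) (σ : List S) :
      Step (Tr.shift s a t) (s :: σ) (t :: σ)
  | call (s u t : S) (σ : List S) :
      Step (Tr.call s u t) (s :: σ) (u :: t :: σ)
  | reduce (s : S) (p : P) (σ : List S) :
      Step (Tr.reduce s p) (s :: σ) σ

/-- Reachability along a sequence of transitions, all belonging to `D`. -/
inductive Reach (D : Set (Tr S A P)) : List (Tr S A P) → List S → List S → Prop where
  | nil (σ : List S) : Reach D [] σ σ
  | cons {d : Tr S A P} {δ : List (Tr S A P)} {σ σ' σ'' : List S} :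
      d ∈ D → Step d σ σ' → Reach D δ σ' σ'' → Reach D (d :: δ) σ σ''

/-- `η` consists of non-shift transitions (membership in `D` is enforced by `Reach`). -/
def EpsSeq (η : List (Tr S A P)) : Prop := ∀ d ∈ η, ¬ d.isShift

/-- `Δ_{s⇝σ} = {rev η : η ∈ D_ε*, s →_η σ}`. -/
def DeltaRel (D : Set (Tr S A P)) (s : S) (σ : List S) : Set (List (Tr S A P)) :=
  {ρ | ∃ η : List (Tr S A P), EpsSeq η ∧ Reach D η [s] σ ∧ ρ = η.reverse}

theorem Step.append_right {d : Tr S A P} {σ τ : List S} (h : Step d σ τ) (β : List S) :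
    Step d (σ ++ β) (τ ++ β) := by
  cases h <;> constructor

theorem Reach.append_right {D : Set (Tr S A P)} {δ : List (Tr S A P)} {σ τ : List S}
    (h : Reach D δ σ τ) (β : List S) : Reach D δ (σ ++ β) (τ ++ β) := by
  induction h with
  | nil σ => exact .nil _
  | cons hd hs _ ih => exact .cons hd (hs.append_right β) ih

theorem Reach.trans {D : Set (Tr S A P)} {δ₁ δ₂ : List (Tr S A P)} {σ τ υ : List S}
    (h₁ : Reach D δ₁ σ τ) (h₂ : Reach D δ₂ τ υ) : Reach D (δ₁ ++ δ₂) σ υ := by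
  induction h₁ with
  | nil σ => exact h₂
  | cons hd hs _ ih => exact .cons hd hs (ih h₂)

theorem Reach.eq_of_nil {D : Set (Tr S A P)} {δ : List (Tr S A P)} {σ : List S}
    (h : Reach D δ [] σ) : σ = [] := by
  cases h with
  | nil => rfl
  | cons _ hs _ => cases hs

/-- A step from a configuration with nonempty upper part `α` acts on `α` alone. -/
theorem Step.exists_of_append {d : Tr S A P} {α β τ : List S} (hα : α ≠ [])
    (h : Step d (α ++ β) τ) : ∃ α', Step d α α' ∧ τ = α' ++ β := by
  obtain ⟨x, α, rfl⟩ := List.exists_cons_of_ne_nil hα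
  rw [List.cons_append] at h
  cases h with
  | shift _ a t => exact ⟨t :: α, .shift _ _ _ _, rfl⟩
  | call _ u t => exact ⟨u :: t :: α, .call _ _ _ _, rfl⟩
  | reduce _ p => exact ⟨α, .reduce _ _ _, rfl⟩

/-- A run from `α ++ β` either consumes `α` and continues from `β`, or never touches `β`. -/
theorem Reach.split {D : Set (Tr S A P)} {δ : List (Tr S A P)} {α β γ : List S}
    (h : Reach D δ (α ++ β) γ) :
    (∃ δ₁ δ₂, δ = δ₁ ++ δ₂ ∧ Reach D δ₁ α [] ∧ Reach D δ₂ β γ) ∨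
      ∃ α', α' ≠ [] ∧ γ = α' ++ β ∧ Reach D δ α α' := by
  induction δ generalizing α with
  | nil =>
    by_cases hα : α = []
    · subst hα
      exact .inl ⟨[], [], rfl, .nil _, h⟩
    · cases h
      exact .inr ⟨α, hα, rfl, .nil _⟩
  | cons d δ ih =>
    by_cases hα : α = []
    · subst hα
      exact .inl ⟨[], d :: δ, rfl, .nil _, h⟩
    · cases h with
      | cons hd hs hr =>
        obtain ⟨α', hs', rfl⟩ := hs.exists_of_append hα
        rcases ih hr with ⟨δ₁, δ₂, rfl, h₁, h₂⟩ | ⟨α'', hne, hγ, h₁⟩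
        · exact .inl ⟨d :: δ₁, δ₂, rfl, .cons hd hs' h₁, h₂⟩
        · exact .inr ⟨α'', hne, hγ, .cons hd hs' h₁⟩

/-- **Single-state reachability equation:**
`Δ_{s⇝t} = E ∪ ⋃_{call⟨s,u,s'⟩∈D} Δ_{s'⇝t}·Δ_{u⇝ε}·{call⟨s,u,s'⟩}`,
where `E = {ε}` if `s = t` and `E = ∅` otherwise. -/
theorem single_state_reachability_equation
    (S A P : Type) (D : Set (Tr S A P)) (s t : S) :
    DeltaRel D s [t] =
      {ρ | s = t ∧ ρ = ([] : List (Tr S A P))} ∪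
      {ρ | ∃ u s' : S, Tr.call s u s' ∈ D ∧
        ∃ ρ₁ ∈ DeltaRel D s' [t], ∃ ρ₂ ∈ DeltaRel D u [],
          ρ = ρ₁ ++ ρ₂ ++ [Tr.call s u s']} := by
  ext ρ
  constructor
  · rintro ⟨η, hε, hr, rfl⟩
    cases hr with
    | nil => exact .inl ⟨rfl, rfl⟩
    | @cons d δ _ _ _ hd hs hr =>
      cases hs with
      | shift _ a t' => exact absurd trivial (hε _ List.mem_cons_self)
      | reduce _ p => exact absurd hr.eq_of_nil (List.cons_ne_nil _ _)
      | call _ u s' =>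
        refine .inr ⟨u, s', hd, ?_⟩
        rcases Reach.split (α := [u]) (β := [s']) hr with
          ⟨δ₁, δ₂, rfl, h₁, h₂⟩ | ⟨α', hne, hγ, -⟩
        · refine ⟨δ₂.reverse, ⟨δ₂, fun x hx => hε x (by simp [hx]), h₂, rfl⟩,
            δ₁.reverse, ⟨δ₁, fun x hx => hε x (by simp [hx]), h₁, rfl⟩, by simp⟩
        -- The lengths disagree: `[t]` would be a nonempty word followed by one more state.
        · have hlen := congrArg List.length hγ
          have hpos := List.length_pos_iff.mpr hne
          simp only [List.length_append, List.length_cons, List.length_nil] at hlen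
          omega
  · rintro (⟨rfl, rfl⟩ | ⟨u, s', hd, _, ⟨δ₂, hε₂, h₂, rfl⟩, _, ⟨δ₁, hε₁, h₁, rfl⟩, rfl⟩)
    · exact ⟨[], fun _ h => by simp at h, .nil _, rfl⟩
    · refine ⟨Tr.call s u s' :: (δ₁ ++ δ₂), ?_,
        .cons hd (.call s u s' []) ((h₁.append_right [s']).trans h₂), by simp⟩
      intro x hx
      rcases List.mem_cons.mp hx with rfl | hx
      · exact id
      · exact (List.mem_append.mp hx).elim (hε₁ x) (hε₂ x)
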